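/- Two m-tuples of density operators (tuples of positive semidefinite Hermitian matrices of trace 1) on V₁⊗⋯⊗Vₙ are in the same local unitary orbit (simultaneous conjugation by u₁⊗⋯⊗uₙ with uᵢ unitary) if and only if all polynomial invariants of the local GL-conjugation action agree on them; equivalently, the trace monomials Tr^P_σ form a complete set of invariants for local unitary equivalence. -/

import Mathlib

open Matrix
open scoped ComplexOrder

/-- The Kronecker (tensor) product `g₁ ⊗ ⋯ ⊗ gₙ` of local matrices. -/
noncomputable def kron {n : ℕ} {d : Fin n → ℕ}
    (g : ∀ i, Matrix (Fin (d i)) (Fin (d i)) ℂ) :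
    Matrix (∀ i, Fin (d i)) (∀ i, Fin (d i)) ℂ :=
  fun a b => ∏ i, g i (a i) (b i)

/-- The trace monomial `Tr^P_σ` evaluated on the tuple `(M_{p₁},…,M_{p_ℓ})`:
the multilinear extension of `⊗ⱼMⱼ ↦ ∏ᵢ (product over cycles of σᵢ of traces)`. -/
noncomputable def trMonP {n m ℓ : ℕ} {d : Fin n → ℕ}
    (P : Fin ℓ → Fin m) (σ : Fin n → Equiv.Perm (Fin ℓ))
    (M : Fin m → Matrix (∀ i, Fin (d i)) (∀ i, Fin (d i)) ℂ) : ℂ :=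
  ∑ a : Fin ℓ → ∀ i, Fin (d i), ∏ c, M (P c) (a c) (fun i => a (σ i c) i)

/-- General (heterogeneous) Kronecker product. -/
noncomputable def bigK {ι : Type*} [Fintype ι] {J : ι → Type*}
    (g : ∀ i, Matrix (J i) (J i) ℂ) : Matrix (∀ i, J i) (∀ i, J i) ℂ :=
  fun a b => ∏ i, g i (a i) (b i)

theorem bigK_mul {ι : Type*} [Fintype ι] [DecidableEq ι] {J : ι → Type*} [∀ i, Fintype (J i)]
    (g h : ∀ i, Matrix (J i) (J i) ℂ) :
    bigK (fun i => g i * h i) = bigK g * bigK h := by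
  ext a b
  simp only [bigK, Matrix.mul_apply]
  rw [Finset.prod_univ_sum]
  simp [Finset.prod_mul_distrib]

theorem bigK_one {ι : Type*} [Fintype ι] {J : ι → Type*} [∀ i, DecidableEq (J i)]
    [DecidableEq (∀ i, J i)] :
    bigK (fun i => (1 : Matrix (J i) (J i) ℂ)) = 1 := by
  ext a b
  simp only [bigK, Matrix.one_apply]
  by_cases h : a = b
  · simp [h]
  · obtain ⟨i, hi⟩ := Function.ne_iff.mp h
    rw [if_neg h]
    exact Finset.prod_eq_zero (Finset.mem_univ i) (if_neg hi)

theorem bigK_conjTranspose {ι : Type*} [Fintype ι] {J : ι → Type*}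
    (g : ∀ i, Matrix (J i) (J i) ℂ) :
    bigK (fun i => (g i)ᴴ) = (bigK g)ᴴ := by
  ext a b
  simp [bigK, Matrix.conjTranspose_apply]

theorem kron_eq {n : ℕ} {d : Fin n → ℕ} (g : ∀ i, Matrix (Fin (d i)) (Fin (d i)) ℂ) :
    kron g = bigK g := rfl

theorem kron_inv {n : ℕ} {d : Fin n → ℕ} (g : ∀ i, Matrix (Fin (d i)) (Fin (d i)) ℂ)
    (hg : ∀ i, IsUnit (g i)) : (kron g)⁻¹ = kron (fun i => (g i)⁻¹) := by
  apply Matrix.inv_eq_right_inv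
  rw [kron_eq, kron_eq, ← bigK_mul]
  rw [← bigK_one]
  congr 1
  funext i
  exact Matrix.mul_nonsing_inv _ ((Matrix.isUnit_iff_isUnit_det _).mp (hg i))

theorem kron_mul {n : ℕ} {d : Fin n → ℕ} (g h : ∀ i, Matrix (Fin (d i)) (Fin (d i)) ℂ) :
    kron g * kron h = kron (fun i => g i * h i) := by
  rw [kron_eq, kron_eq, kron_eq, ← bigK_mul]

theorem kron_conjTranspose {n : ℕ} {d : Fin n → ℕ}
    (g : ∀ i, Matrix (Fin (d i)) (Fin (d i)) ℂ) :
    (kron g)ᴴ = kron (fun i => (g i)ᴴ) := by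
  rw [kron_eq, kron_eq, ← bigK_conjTranspose]

theorem kron_one' {n : ℕ} {d : Fin n → ℕ} :
    kron (fun i => (1 : Matrix (Fin (d i)) (Fin (d i)) ℂ)) = 1 := by
  rw [kron_eq, bigK_one]

/-- Permutation matrix: `P x y = 1` iff `x = g y`. -/
noncomputable def pm {T : Type*} [DecidableEq T] (g : Equiv.Perm T) : Matrix T T ℂ :=
  fun x y => if x = g y then 1 else 0

theorem pm_mul_apply {T : Type*} [DecidableEq T] [Fintype T] (g : Equiv.Perm T)
    (X : Matrix T T ℂ) (x y : T) : (pm g * X) x y = X (g⁻¹ x) y := by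
  simp only [Matrix.mul_apply, pm]
  rw [Finset.sum_eq_single (g⁻¹ x)]
  · simp
  · intro b _ hb
    rw [if_neg, zero_mul]
    intro h
    apply hb
    rw [h]; simp
  · simp

theorem mul_pm_apply {T : Type*} [DecidableEq T] [Fintype T] (g : Equiv.Perm T)
    (X : Matrix T T ℂ) (x y : T) : (X * pm g) x y = X x (g y) := by
  simp [Matrix.mul_apply, pm]

theorem pm_mul_pm {T : Type*} [DecidableEq T] [Fintype T] (g h : Equiv.Perm T) :
    pm g * pm h = pm (g * h) := by
  ext x y
  rw [mul_pm_apply]; rfl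

theorem pm_one {T : Type*} [DecidableEq T] : pm (1 : Equiv.Perm T) = 1 := by
  ext x y
  simp only [pm, Matrix.one_apply, Equiv.Perm.one_apply]
  rfl

/-- Double commutant theorem for a finite permutation group. -/
theorem double_comm {T G : Type*} [DecidableEq T] [Fintype T] [Group G] [Fintype G]
    (φ : G →* Equiv.Perm T) (W : Matrix T T ℂ)
    (hW : ∀ B : Matrix T T ℂ, (∀ g x y, B (φ g x) (φ g y) = B x y) → B * W = W * B) :
    ∃ c : G → ℂ, W = ∑ g, c g • pm (φ g) := by
  classical
  let A : Submodule ℂ (Matrix T T ℂ) := Submodule.span ℂ (Set.range fun g => pm (φ g))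
  have hmem : ∀ g, pm (φ g) ∈ A := fun g => Submodule.subset_span ⟨g, rfl⟩
  have hmul : ∀ g, ∀ X ∈ A, pm (φ g) * X ∈ A := by
    intro g X hX
    induction hX using Submodule.span_induction with
    | mem x hx =>
      obtain ⟨h, rfl⟩ := hx
      simp only [pm_mul_pm, ← map_mul]
      exact hmem _
    | zero => simp
    | add x y _ _ hx hy => rw [mul_add]; exact A.add_mem hx hy
    | smul a x _ hx => rw [mul_smul_comm]; exact A.smul_mem _ hx
  obtain ⟨π, hπ⟩ := A.subtype.exists_leftInverse_of_injective A.ker_subtype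
  have hπ' : ∀ X (hX : X ∈ A), (π X : Matrix T T ℂ) = X := by
    intro X hX
    have := LinearMap.congr_fun hπ ⟨X, hX⟩
    simpa using congrArg Subtype.val this
  let p : Matrix T T ℂ →ₗ[ℂ] Matrix T T ℂ := (Fintype.card G : ℂ)⁻¹ •
    ∑ g : G, (LinearMap.mulLeft ℂ (pm (φ g⁻¹))) ∘ₗ A.subtype ∘ₗ π ∘ₗ
      (LinearMap.mulLeft ℂ (pm (φ g)))
  have hp : ∀ X, p X = (Fintype.card G : ℂ)⁻¹ •
      ∑ g : G, pm (φ g⁻¹) * (π (pm (φ g) * X) : Matrix T T ℂ) := by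
    intro X
    simp [p, LinearMap.sum_apply]
  have hpA : ∀ X, p X ∈ A := by
    intro X
    rw [hp]
    exact A.smul_mem _ (A.sum_mem fun g _ => hmul _ _ (π _).2)
  have hp1 : p 1 = 1 := by
    rw [hp]
    have : ∀ g : G, pm (φ g⁻¹) * (π (pm (φ g) * 1) : Matrix T T ℂ) = 1 := by
      intro g
      rw [mul_one, hπ' _ (hmem g), pm_mul_pm, ← map_mul]
      simp [pm_one]
    simp only [this]
    rw [Finset.sum_const, Finset.card_univ, ← Nat.cast_smul_eq_nsmul ℂ, smul_smul,
      inv_mul_cancel₀ (by simp), one_smul]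
  have hpc : ∀ h X, p (pm (φ h) * X) = pm (φ h) * p X := by
    intro h X
    rw [hp, hp, mul_smul_comm, Finset.mul_sum]
    congr 1
    refine Fintype.sum_equiv (Equiv.mulRight h) _ _ fun g => ?_
    simp only [Equiv.coe_mulRight, ← mul_assoc, pm_mul_pm, ← map_mul]
    simp
  let B : T → T → Matrix T T ℂ := fun y y' => Matrix.of fun x x' => p (Matrix.single x' y' 1) x y
  have hB : ∀ y y', B y y' * W = W * B y y' := by
    intro y y'
    apply hW
    intro g x x'
    have h1 : pm (φ g) * Matrix.single x' y' (1 : ℂ) = Matrix.single (φ g x') y' 1 := by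
      ext a b
      rw [pm_mul_apply]
      simp only [Matrix.single_apply]
      congr 1
      rw [Equiv.Perm.eq_inv_iff_eq]
    simp only [B, Matrix.of_apply]
    rw [← h1, hpc, pm_mul_apply]
    simp
  have hpW : p W = W := by
    ext x y
    have h1 : W = ∑ x', ∑ y', W x' y' • Matrix.single x' y' (1 : ℂ) := by
      conv_lhs => rw [Matrix.matrix_eq_sum_single W]
      simp
    have h2 : (1 : Matrix T T ℂ) = ∑ y', Matrix.single y' y' (1 : ℂ) := by
      rw [← Matrix.sum_single_one]
    calc p W x y = ∑ x', ∑ y', W x' y' * p (Matrix.single x' y' 1) x y := by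
            conv_lhs => rw [h1]
            simp only [map_sum, map_smul, Matrix.sum_apply, Matrix.smul_apply, smul_eq_mul]
      _ = ∑ y', (B y y' * W) x y' := by
            rw [Finset.sum_comm]
            simp [Matrix.mul_apply, B, Matrix.of_apply, mul_comm]
      _ = ∑ y', (W * B y y') x y' := by simp [hB]
      _ = ∑ x', W x x' * p 1 x' y := by
            rw [h2]
            simp only [Matrix.mul_apply, B, Matrix.of_apply, map_sum, Matrix.sum_apply, Finset.mul_sum]
            rw [Finset.sum_comm]
      _ = W x y := by rw [hp1]; simp [Matrix.one_apply]
  have hWA : W ∈ A := hpW ▸ hpA W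
  obtain ⟨c, hc⟩ := (Submodule.mem_span_range_iff_exists_fun ℂ).mp hWA
  exact ⟨c, hc.symm⟩

/-- Unitary tuples are Zariski dense: step 1, Hermitian tuples. -/
theorem zar_herm {n : ℕ} {d : Fin n → ℕ}
    (f : MvPolynomial (Σ i : Fin n, Fin (d i) × Fin (d i)) ℂ)
    (hf : ∀ u : ∀ i, Matrix (Fin (d i)) (Fin (d i)) ℂ,
      (∀ i, u i ∈ Matrix.unitaryGroup (Fin (d i)) ℂ) →
        MvPolynomial.eval (fun p => u p.1 p.2.1 p.2.2) f = 0)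
    (H : ∀ i, Matrix (Fin (d i)) (Fin (d i)) ℂ) (hH : ∀ i, (H i).IsHermitian) :
    MvPolynomial.eval (fun p => H p.1 p.2.1 p.2.2) f = 0 := by
  classical
  let V : ∀ i, Matrix (Fin (d i)) (Fin (d i)) ℂ := fun i => (hH i).eigenvectorUnitary
  have hV : ∀ i, V i ∈ Matrix.unitaryGroup (Fin (d i)) ℂ := fun i =>
    (hH i).eigenvectorUnitary.2
  let q : MvPolynomial (Σ i : Fin n, Fin (d i)) ℂ :=
    MvPolynomial.bind₁ (fun p : (Σ i : Fin n, Fin (d i) × Fin (d i)) =>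
      ∑ k, MvPolynomial.C (V p.1 p.2.1 k) * MvPolynomial.X ⟨p.1, k⟩ *
        MvPolynomial.C (star (V p.1 p.2.2 k))) f
  have hq : ∀ z : (Σ i : Fin n, Fin (d i)) → ℂ, MvPolynomial.eval z q =
      MvPolynomial.eval (fun p => (V p.1 * Matrix.diagonal (fun k => z ⟨p.1, k⟩) * (V p.1)ᴴ)
        p.2.1 p.2.2) f := by
    intro z
    simp only [q, MvPolynomial.eval, MvPolynomial.eval₂Hom_bind₁]
    congr 2
    funext p
    simp [Matrix.mul_apply, Matrix.diagonal_apply, Matrix.conjTranspose_apply]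
  have hq0 : q = 0 := by
    apply MvPolynomial.funext_set (fun _ => (Metric.sphere (0 : ℂ) 1))
    · intro _
      apply Set.Infinite.mono (s := Set.range fun t : ℕ => Complex.exp ((t : ℝ) * Complex.I))
      · rintro _ ⟨t, rfl⟩
        simp only [mem_sphere_zero_iff_norm, Complex.norm_exp_ofReal_mul_I]
      · apply Set.infinite_range_of_injective
        intro a b hab
        simp only at hab
        rw [Complex.exp_eq_exp_iff_exists_int] at hab
        obtain ⟨k, hk⟩ := hab
        have h2 : ((a : ℝ) : ℂ) = ((b + k * (2 * Real.pi) : ℝ) : ℂ) := by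
          apply mul_right_cancel₀ Complex.I_ne_zero
          rw [hk]; push_cast; ring
        have h3 : (a : ℝ) = b + k * (2 * Real.pi) := by exact_mod_cast h2
        by_cases hk0 : k = 0
        · subst hk0; simp at h3; exact h3
        · exfalso
          apply irrational_pi
          refine ⟨((a : ℚ) - b) / (2 * k), ?_⟩
          have : (k : ℝ) ≠ 0 := by exact_mod_cast hk0
          push_cast
          rw [h3]; field_simp; ring
    · intro z hz
      rw [hq, map_zero]
      apply hf (fun i => V i * Matrix.diagonal (fun k => z ⟨i, k⟩) * (V i)ᴴ)
      intro i
      refine mul_mem (mul_mem (hV i) ?_) (Unitary.star_mem (hV i))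
      rw [Matrix.mem_unitaryGroup_iff, Matrix.star_eq_conjTranspose,
        Matrix.diagonal_conjTranspose, Matrix.diagonal_mul_diagonal, ← Matrix.diagonal_one]
      congr 1
      funext k
      have := hz ⟨i, k⟩ trivial
      simp only [mem_sphere_zero_iff_norm] at this
      simp only [Pi.star_apply, RCLike.star_def]
      rw [Complex.mul_conj, Complex.normSq_eq_norm_sq, this]; simp
  have := hq (fun p => ((hH p.1).eigenvalues p.2 : ℂ))
  rw [hq0, map_zero] at this
  rw [this]
  congr 1
  congr 1
  funext p
  conv_lhs => rw [(hH p.1).spectral_theorem]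
  rfl

theorem zar {n : ℕ} {d : Fin n → ℕ}
    (f : MvPolynomial (Σ i : Fin n, Fin (d i) × Fin (d i)) ℂ)
    (hf : ∀ u : ∀ i, Matrix (Fin (d i)) (Fin (d i)) ℂ,
      (∀ i, u i ∈ Matrix.unitaryGroup (Fin (d i)) ℂ) →
        MvPolynomial.eval (fun p => u p.1 p.2.1 p.2.2) f = 0) : f = 0 := by
  apply MvPolynomial.funext
  intro x
  rw [map_zero]
  let g : ∀ i, Matrix (Fin (d i)) (Fin (d i)) ℂ := fun i => Matrix.of fun a b => x ⟨i, a, b⟩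
  let A : ∀ i, Matrix (Fin (d i)) (Fin (d i)) ℂ := fun i => (1 / 2 : ℂ) • (g i + (g i)ᴴ)
  let B : ∀ i, Matrix (Fin (d i)) (Fin (d i)) ℂ := fun i => (-Complex.I / 2) • (g i - (g i)ᴴ)
  have hA : ∀ i, (A i).IsHermitian := by
    intro i
    simp only [A, Matrix.IsHermitian, Matrix.conjTranspose_smul, Matrix.conjTranspose_add,
      Matrix.conjTranspose_conjTranspose]
    rw [add_comm]
    simp
  have hB : ∀ i, (B i).IsHermitian := by
    intro i
    simp only [B, Matrix.IsHermitian, Matrix.conjTranspose_smul, Matrix.conjTranspose_sub,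
      Matrix.conjTranspose_conjTranspose]
    rw [← neg_sub, smul_neg, ← neg_smul]
    congr 1
    simp [neg_div]
  let q : Polynomial ℂ := MvPolynomial.eval₂ (Polynomial.C)
    (fun p : (Σ i : Fin n, Fin (d i) × Fin (d i)) =>
      Polynomial.C (A p.1 p.2.1 p.2.2) + Polynomial.X * Polynomial.C (B p.1 p.2.1 p.2.2)) f
  have hq : ∀ t : ℂ, q.eval t =
      MvPolynomial.eval (fun p => A p.1 p.2.1 p.2.2 + t * B p.1 p.2.1 p.2.2) f := by
    intro t
    simp only [q]
    rw [← Polynomial.coe_evalRingHom, MvPolynomial.hom_eval₂]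
    simp only [MvPolynomial.eval, MvPolynomial.coe_eval₂Hom]
    congr 1
    · ext; simp
    · funext p
      simp only [Polynomial.coe_evalRingHom, Polynomial.eval_add, Polynomial.eval_mul,
        Polynomial.eval_C, Polynomial.eval_X]
  have hq0 : q = 0 := by
    apply Polynomial.eq_zero_of_infinite_isRoot
    apply Set.Infinite.mono (s := Set.range fun t : ℕ => (t : ℂ))
    · rintro _ ⟨t, rfl⟩
      simp only [Set.mem_ofPred_eq, Polynomial.IsRoot]
      rw [hq]
      have := zar_herm f hf (fun i => A i + (t : ℂ) • B i) (fun i => (hA i).add (by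
        have := hB i
        simp only [Matrix.IsHermitian, Matrix.conjTranspose_smul] at this ⊢
        rw [this]; simp))
      simpa using this
    · exact Set.infinite_range_of_injective Nat.cast_injective
  have h := hq Complex.I
  rw [hq0, Polynomial.eval_zero] at h
  rw [h]
  congr 2
  funext p
  simp only [A, B, g, Matrix.smul_apply, Matrix.add_apply, Matrix.sub_apply, Matrix.of_apply,
    smul_eq_mul]
  ring_nf
  simp
  ring

/-- Two functions with equal fibre cardinalities differ by a permutation. -/
theorem exists_perm_of_count {L X : Type*} [Fintype L] [DecidableEq X] (h h' : L → X)
    (hc : ∀ x, Fintype.card {c // h c = x} = Fintype.card {c // h' c = x}) :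
    ∃ σ : Equiv.Perm L, ∀ c, h' (σ c) = h c := by
  let e : ∀ x, {c // h c = x} ≃ {c // h' c = x} := fun x => Fintype.equivOfCardEq (hc x)
  refine ⟨(Equiv.sigmaFiberEquiv h).symm.trans
    ((Equiv.sigmaCongrRight e).trans (Equiv.sigmaFiberEquiv h')), fun c => ?_⟩
  exact (e (h c) ⟨c, rfl⟩).2

/-- Local permutation action on multi-indices. -/
def locPerm {n ℓ : ℕ} (d : Fin n → ℕ) :
    (Fin n → Equiv.Perm (Fin ℓ)) →* Equiv.Perm (Fin ℓ → ∀ i, Fin (d i)) where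
  toFun g :=
    { toFun := fun a c i => a ((g i)⁻¹ c) i
      invFun := fun a c i => a (g i c) i
      left_inv := fun a => by funext c i; simp
      right_inv := fun a => by funext c i; simp }
  map_one' := by ext; simp
  map_mul' g h := by ext; simp

theorem locPerm_apply {n ℓ : ℕ} (d : Fin n → ℕ) (g : Fin n → Equiv.Perm (Fin ℓ))
    (a : Fin ℓ → ∀ i, Fin (d i)) (c i) : locPerm d g a c i = a ((g i)⁻¹ c) i := rfl

/-- Tensor power of a local operator. -/
noncomputable def tp {n : ℕ} {d : Fin n → ℕ} (ℓ : ℕ)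
    (u : ∀ i, Matrix (Fin (d i)) (Fin (d i)) ℂ) :
    Matrix (Fin ℓ → ∀ i, Fin (d i)) (Fin ℓ → ∀ i, Fin (d i)) ℂ :=
  bigK (fun _ : Fin ℓ => kron u)

theorem comm_of_comm {n ℓ : ℕ} {d : Fin n → ℕ}
    (A : Matrix (Fin ℓ → ∀ i, Fin (d i)) (Fin ℓ → ∀ i, Fin (d i)) ℂ)
    (hA : ∀ u : ∀ i, Matrix (Fin (d i)) (Fin (d i)) ℂ,
      (∀ i, u i ∈ Matrix.unitaryGroup (Fin (d i)) ℂ) → tp ℓ u * A = A * tp ℓ u)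
    (B : Matrix (Fin ℓ → ∀ i, Fin (d i)) (Fin ℓ → ∀ i, Fin (d i)) ℂ)
    (hB : ∀ g x y, B (locPerm d g x) (locPerm d g y) = B x y) : B * A = A * B := by
  classical
  let T := Fin ℓ → ∀ i, Fin (d i)
  let κ : T × T → ((Σ i : Fin n, Fin (d i) × Fin (d i)) →₀ ℕ) := fun ab =>
    ∑ c, ∑ i, Finsupp.single ⟨i, ab.1 c i, ab.2 c i⟩ 1
  have hκ : ∀ ab i x, κ ab ⟨i, x⟩ = Fintype.card {c // (ab.1 c i, ab.2 c i) = x} := by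
    intro ab i x
    simp only [κ, Finsupp.finsetSum_apply]
    rw [Fintype.card_subtype, Finset.card_filter]
    refine Finset.sum_congr rfl fun c _ => ?_
    rw [Finset.sum_eq_single i]
    · simp [Finsupp.single_apply]
    · intro j _ hj
      rw [Finsupp.single_apply, if_neg]
      intro h
      exact hj (congrArg Sigma.fst h)
    · simp
  have hBκ : Function.FactorsThrough (fun ab : T × T => B ab.1 ab.2) κ := by
    intro ab ab' h
    have : ∀ i, ∃ σ : Equiv.Perm (Fin ℓ), ∀ c,
        (ab'.1 (σ c) i, ab'.2 (σ c) i) = (ab.1 c i, ab.2 c i) := by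
      intro i
      apply exists_perm_of_count (fun c => (ab.1 c i, ab.2 c i)) (fun c => (ab'.1 c i, ab'.2 c i))
      intro x
      rw [← hκ, ← hκ, h]
    choose σ hσ using this
    have h1 : ab.1 = locPerm d (fun i => (σ i)⁻¹) ab'.1 := by
      funext c i
      rw [locPerm_apply]
      simpa using (congrArg Prod.fst (hσ i c)).symm
    have h2 : ab.2 = locPerm d (fun i => (σ i)⁻¹) ab'.2 := by
      funext c i
      rw [locPerm_apply]
      simpa using (congrArg Prod.snd (hσ i c)).symm
    simp only
    rw [h1, h2, hB]
  let F : ((Σ i : Fin n, Fin (d i) × Fin (d i)) →₀ ℕ) → ℂ :=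
    Function.extend κ (fun ab : T × T => B ab.1 ab.2) 0
  have hF : ∀ a b, F (κ (a, b)) = B a b := fun a b => hBκ.extend_apply 0 (a, b)
  let Λ := (MvPolynomial.basisMonomials (Σ i : Fin n, Fin (d i) × Fin (d i)) ℂ).constr ℂ F
  have hΛ : ∀ a b, Λ (MvPolynomial.monomial (κ (a, b)) 1) = B a b := by
    intro a b
    rw [← hF]
    have := (MvPolynomial.basisMonomials (Σ i : Fin n, Fin (d i) × Fin (d i)) ℂ).constr_basis ℂ F
      (κ (a, b))
    rwa [MvPolynomial.coe_basisMonomials] at this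
  have hev : ∀ (u : ∀ i, Matrix (Fin (d i)) (Fin (d i)) ℂ) a b,
      MvPolynomial.eval (fun p => u p.1 p.2.1 p.2.2) (MvPolynomial.monomial (κ (a, b)) 1)
        = tp ℓ u a b := by
    intro u a b
    have : MvPolynomial.monomial (κ (a, b)) (1 : ℂ) =
        ∏ c, ∏ i, MvPolynomial.X ⟨i, a c i, b c i⟩ := by
      simp only [κ, MvPolynomial.X]
      simp only [MvPolynomial.monomial_sum_one]
    rw [this]
    simp [map_prod, tp, bigK, kron]
  ext s t
  let f : MvPolynomial (Σ i : Fin n, Fin (d i) × Fin (d i)) ℂ :=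
    (∑ b, A b t • MvPolynomial.monomial (κ (s, b)) 1) -
      ∑ b, A s b • MvPolynomial.monomial (κ (b, t)) 1
  have hf : f = 0 := by
    apply zar
    intro u hu
    have := congrFun (congrFun (hA u hu) s) t
    simp only [f, map_sub, map_sum, MvPolynomial.smul_eval, hev]
    rw [sub_eq_zero]
    simpa [Matrix.mul_apply, mul_comm] using this
  have := congrArg Λ hf
  simp only [f, map_sub, map_sum, map_smul, hΛ, map_zero, sub_eq_zero] at this
  simpa [Matrix.mul_apply, mul_comm] using this

theorem trMonP_eq {n m ℓ : ℕ} {d : Fin n → ℕ}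
    (P : Fin ℓ → Fin m) (σ : Fin n → Equiv.Perm (Fin ℓ))
    (M : Fin m → Matrix (∀ i, Fin (d i)) (∀ i, Fin (d i)) ℂ) :
    trMonP P σ M = (bigK (fun c => M (P c)) * pm (locPerm d σ⁻¹)).trace := by
  classical
  simp only [trMonP, Matrix.trace, Matrix.diag, mul_pm_apply]
  refine Finset.sum_congr rfl fun a _ => ?_
  simp only [bigK]
  refine Finset.prod_congr rfl fun c _ => ?_
  congr 1

theorem tp_inv {n ℓ : ℕ} {d : Fin n → ℕ} (u : ∀ i, Matrix (Fin (d i)) (Fin (d i)) ℂ)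
    (g : Fin n → Equiv.Perm (Fin ℓ)) (x y) :
    tp ℓ u (locPerm d g x) (locPerm d g y) = tp ℓ u x y := by
  simp only [tp, bigK, kron, locPerm_apply]
  rw [Finset.prod_comm]
  conv_rhs => rw [Finset.prod_comm]
  refine Finset.prod_congr rfl fun i _ => ?_
  exact Fintype.prod_equiv (g i)⁻¹ _ _ fun c => rfl

theorem tp_comm_pm {n ℓ : ℕ} {d : Fin n → ℕ} (u : ∀ i, Matrix (Fin (d i)) (Fin (d i)) ℂ)
    (g : Fin n → Equiv.Perm (Fin ℓ)) :
    tp ℓ u * pm (locPerm d g) = pm (locPerm d g) * tp ℓ u := by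
  ext x y
  rw [mul_pm_apply, pm_mul_apply, ← tp_inv u g ((locPerm d g)⁻¹ x) y]
  simp

theorem tp_mul {n ℓ : ℕ} {d : Fin n → ℕ} (u v : ∀ i, Matrix (Fin (d i)) (Fin (d i)) ℂ) :
    tp ℓ u * tp ℓ v = tp ℓ (fun i => u i * v i) := by
  simp only [tp]
  rw [← bigK_mul]
  simp only [kron_mul]

theorem tp_one {n ℓ : ℕ} {d : Fin n → ℕ} :
    tp ℓ (fun i => (1 : Matrix (Fin (d i)) (Fin (d i)) ℂ)) = 1 := by
  simp only [tp, kron_one']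
  exact bigK_one

theorem tp_conjTranspose {n ℓ : ℕ} {d : Fin n → ℕ}
    (u : ∀ i, Matrix (Fin (d i)) (Fin (d i)) ℂ) :
    (tp ℓ u)ᴴ = tp ℓ (fun i => (u i)ᴴ) := by
  simp only [tp, ← kron_conjTranspose]
  rw [← bigK_conjTranspose]

theorem trMonP_conj {n m ℓ : ℕ} {d : Fin n → ℕ}
    (P : Fin ℓ → Fin m) (σ : Fin n → Equiv.Perm (Fin ℓ))
    (g : ∀ i, Matrix (Fin (d i)) (Fin (d i)) ℂ) (hg : ∀ i, IsUnit (g i))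
    (M : Fin m → Matrix (∀ i, Fin (d i)) (∀ i, Fin (d i)) ℂ) :
    trMonP P σ (fun j => kron g * M j * (kron g)⁻¹) = trMonP P σ M := by
  rw [trMonP_eq, trMonP_eq, kron_inv g hg, bigK_mul, bigK_mul]
  change (tp ℓ g * _ * tp ℓ (fun i => (g i)⁻¹) * _).trace = _
  rw [mul_assoc, tp_comm_pm, ← mul_assoc, Matrix.trace_mul_comm, ← mul_assoc, ← mul_assoc,
    tp_mul]
  have : (fun i => (g i)⁻¹ * g i) = fun i => (1 : Matrix (Fin (d i)) (Fin (d i)) ℂ) := by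
    funext i
    exact Matrix.nonsing_inv_mul _ ((Matrix.isUnit_iff_isUnit_det _).mp (hg i))
  rw [this, tp_one, one_mul]

/-- The polynomial of a trace monomial. -/
theorem trMonP_poly {n m ℓ : ℕ} {d : Fin n → ℕ}
    (P : Fin ℓ → Fin m) (σ : Fin n → Equiv.Perm (Fin ℓ)) :
    ∃ f : MvPolynomial (Fin m × (∀ i, Fin (d i)) × (∀ i, Fin (d i))) ℂ,
      ∀ X : Fin m → Matrix (∀ i, Fin (d i)) (∀ i, Fin (d i)) ℂ,
        MvPolynomial.eval (fun p => X p.1 p.2.1 p.2.2) f = trMonP P σ X := by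
  refine ⟨∑ a : Fin ℓ → ∀ i, Fin (d i), ∏ c,
    MvPolynomial.X (P c, a c, fun i => a (σ i c) i), fun X => ?_⟩
  simp [trMonP]

/-- The local unitary group. -/
abbrev LU {n : ℕ} (d : Fin n → ℕ) := ∀ i, Matrix.unitaryGroup (Fin (d i)) ℂ

/-- Underlying matrices. -/
def LU.mat {n : ℕ} {d : Fin n → ℕ} (u : LU d) : ∀ i, Matrix (Fin (d i)) (Fin (d i)) ℂ :=
  fun i => (u i : Matrix (Fin (d i)) (Fin (d i)) ℂ)

instance unitary_compact (k : ℕ) : CompactSpace (Matrix.unitaryGroup (Fin k) ℂ) := by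
  have hcl : IsClosed ((unitary (Matrix (Fin k) (Fin k) ℂ) : Submonoid _) :
      Set (Matrix (Fin k) (Fin k) ℂ)) := isClosed_unitary
  apply isCompact_iff_compactSpace.mp
  apply IsCompact.of_isClosed_subset (s := Set.pi Set.univ fun _ => Set.pi Set.univ fun _ =>
    Metric.closedBall (0 : ℂ) 1)
  · exact isCompact_univ_pi fun _ => isCompact_univ_pi fun _ => isCompact_closedBall _ _
  · exact hcl
  · intro U hU a _ b _
    simpa using entry_norm_bound_of_unitary hU a b

theorem LU.exists_haar {n : ℕ} (d : Fin n → ℕ) :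
    ∃ (_ : MeasurableSpace (LU d)) (_ : BorelSpace (LU d)) (μ : MeasureTheory.Measure (LU d)),
      μ.IsHaarMeasure ∧ MeasureTheory.IsFiniteMeasure μ := by
  let _ : MeasurableSpace (LU d) := borel _
  have : BorelSpace (LU d) := ⟨rfl⟩
  refine ⟨inferInstance, inferInstance, MeasureTheory.Measure.haarMeasure ⊤, inferInstance,
    inferInstance⟩

theorem LU.continuous_entry {n : ℕ} (d : Fin n → ℕ) (i) (a b : Fin (d i)) :
    Continuous fun u : LU d => u.mat i a b := by
  have h1 : Continuous fun u : LU d => (u i : Matrix (Fin (d i)) (Fin (d i)) ℂ) :=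
    continuous_subtype_val.comp (continuous_apply i)
  exact h1.matrix_elem a b

theorem LU.continuous_kron {n : ℕ} (d : Fin n → ℕ) :
    Continuous fun u : LU d => kron u.mat := by
  apply continuous_matrix
  intro a b
  simp only [kron]
  exact continuous_finsetProd _ fun i _ => LU.continuous_entry d i _ _

theorem LU.continuous_tp {n : ℕ} (d : Fin n → ℕ) (ℓ : ℕ) (a b) :
    Continuous fun u : LU d => tp ℓ u.mat a b := by
  simp only [tp, bigK]
  exact continuous_finsetProd _ fun i _ => (LU.continuous_kron d).matrix_elem _ _

open MeasureTheory in
theorem moments {n m ℓ : ℕ} {d : Fin n → ℕ} [MeasurableSpace (LU d)] [BorelSpace (LU d)]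
    (μ : Measure (LU d)) [μ.IsHaarMeasure] [IsFiniteMeasure μ]
    (M N : Fin m → Matrix (∀ i, Fin (d i)) (∀ i, Fin (d i)) ℂ)
    (h : ∀ (P : Fin ℓ → Fin m) (σ : Fin n → Equiv.Perm (Fin ℓ)), trMonP P σ M = trMonP P σ N)
    (P : Fin ℓ → Fin m) (s t : Fin ℓ → ∀ i, Fin (d i)) :
    ∫ u : LU d, ∏ c, ((kron u.mat)ᴴ * M (P c) * kron u.mat) (s c) (t c) ∂μ =
    ∫ u : LU d, ∏ c, ((kron u.mat)ᴴ * N (P c) * kron u.mat) (s c) (t c) ∂μ := by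
  classical
  have hint : ∀ f : LU d → ℂ, Continuous f → Integrable f μ := fun f hf =>
    hf.integrable_of_hasCompactSupport (HasCompactSupport.of_compactSpace f)
  let W : Matrix (Fin ℓ → ∀ i, Fin (d i)) (Fin ℓ → ∀ i, Fin (d i)) ℂ :=
    Matrix.of fun b a => ∫ u : LU d, tp ℓ u.mat b t * star (tp ℓ u.mat a s) ∂μ
  have hcont : ∀ a b, Continuous fun u : LU d => tp ℓ u.mat b t * star (tp ℓ u.mat a s) :=
    fun a b => (LU.continuous_tp d ℓ b t).mul (LU.continuous_tp d ℓ a s).star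
  have hsum : ∀ z : (Fin ℓ → ∀ i, Fin (d i)) → (Fin ℓ → ∀ i, Fin (d i)) → ℂ,
      ∫ u : LU d, ∑ a, ∑ b, z a b * (tp ℓ u.mat b t * star (tp ℓ u.mat a s)) ∂μ =
        ∑ a, ∑ b, z a b * W b a := by
    intro z
    have hz : ∀ a b, Continuous fun u : LU d =>
        z a b * (tp ℓ u.mat b t * star (tp ℓ u.mat a s)) := fun a b =>
      continuous_const.mul (hcont a b)
    rw [integral_finsetSum _ fun a _ => hint _ (continuous_finsetSum _ fun b _ => hz a b)]
    refine Finset.sum_congr rfl fun a _ => ?_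
    rw [integral_finsetSum _ fun b _ => hint _ (hz a b)]
    refine Finset.sum_congr rfl fun b _ => ?_
    rw [integral_const_mul]
    rfl
  have key : ∀ X : Fin m → Matrix (∀ i, Fin (d i)) (∀ i, Fin (d i)) ℂ,
      ∫ u : LU d, ∏ c, ((kron u.mat)ᴴ * X (P c) * kron u.mat) (s c) (t c) ∂μ =
        (bigK (fun c => X (P c)) * W).trace := by
    intro X
    have h1 : ∀ u : LU d, ∏ c, ((kron u.mat)ᴴ * X (P c) * kron u.mat) (s c) (t c) =
        ∑ a, ∑ b, bigK (fun c => X (P c)) a b *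
          (tp ℓ u.mat b t * star (tp ℓ u.mat a s)) := by
      intro u
      have : ∏ c, ((kron u.mat)ᴴ * X (P c) * kron u.mat) (s c) (t c) =
          ((tp ℓ u.mat)ᴴ * bigK (fun c => X (P c)) * tp ℓ u.mat) s t := by
        simp only [tp]
        rw [← bigK_conjTranspose, ← bigK_mul, ← bigK_mul]
        rfl
      rw [this]
      simp only [Matrix.mul_apply, Matrix.conjTranspose_apply, Finset.sum_mul]
      rw [Finset.sum_comm]
      refine Finset.sum_congr rfl fun a _ => Finset.sum_congr rfl fun b _ => ?_
      ring
    simp only [h1]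
    refine (hsum _).trans ?_
    simp only [Matrix.trace, Matrix.diag, Matrix.mul_apply]
  have hWinv : ∀ v : LU d, tp ℓ v.mat * W * (tp ℓ v.mat)ᴴ = W := by
    intro v
    ext x y
    have h2 : W x y = ∫ u : LU d, tp ℓ (v * u).mat x t * star (tp ℓ (v * u).mat y s) ∂μ :=
      (integral_mul_left_eq_self (fun u : LU d => tp ℓ u.mat x t * star (tp ℓ u.mat y s)) v).symm
    have h3 : ∀ u : LU d, tp ℓ (v * u).mat x t * star (tp ℓ (v * u).mat y s) =
        ∑ a, ∑ b, (tp ℓ v.mat x b * star (tp ℓ v.mat y a)) *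
          (tp ℓ u.mat b t * star (tp ℓ u.mat a s)) := by
      intro u
      have : tp ℓ (v * u).mat = tp ℓ v.mat * tp ℓ u.mat := by
        rw [tp_mul]; rfl
      rw [this, Matrix.mul_apply, Matrix.mul_apply, star_sum, Finset.sum_mul_sum,
        Finset.sum_comm]
      refine Finset.sum_congr rfl fun a _ => Finset.sum_congr rfl fun b _ => ?_
      rw [star_mul']
      ring
    rw [h2]
    simp only [h3]
    refine Eq.trans ?_ (hsum _).symm
    simp only [Matrix.mul_apply, Finset.sum_mul]
    refine Finset.sum_congr rfl fun a _ => Finset.sum_congr rfl fun b _ => ?_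
    rw [Matrix.conjTranspose_apply]
    ring
  have hWcomm : ∀ u : ∀ i, Matrix (Fin (d i)) (Fin (d i)) ℂ,
      (∀ i, u i ∈ Matrix.unitaryGroup (Fin (d i)) ℂ) → tp ℓ u * W = W * tp ℓ u := by
    intro u hu
    have h4 := hWinv (fun i => ⟨u i, hu i⟩)
    change tp ℓ u * W * (tp ℓ u)ᴴ = W at h4
    have h5 : (tp ℓ u)ᴴ * tp ℓ u = 1 := by
      rw [tp_conjTranspose, tp_mul, ← tp_one]
      congr 1
      funext i
      exact Matrix.mem_unitaryGroup_iff'.mp (hu i)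
    conv_rhs => rw [← h4]
    rw [mul_assoc, h5, mul_one]
  obtain ⟨c, hc⟩ := double_comm (locPerm d) W (fun B hB => comm_of_comm W hWcomm B hB)
  rw [key, key, hc]
  simp only [Finset.mul_sum, Matrix.trace_sum, mul_smul_comm, Matrix.trace_smul]
  refine Finset.sum_congr rfl fun g _ => ?_
  have := h P g⁻¹
  rw [trMonP_eq, trMonP_eq, inv_inv] at this
  rw [this]

/-- The orbit map. -/
noncomputable def orb {n m : ℕ} {d : Fin n → ℕ}
    (X : Fin m → Matrix (∀ i, Fin (d i)) (∀ i, Fin (d i)) ℂ) (u : LU d) :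
    Fin m → Matrix (∀ i, Fin (d i)) (∀ i, Fin (d i)) ℂ :=
  fun j => (kron u.mat)ᴴ * X j * kron u.mat

theorem continuous_orb {n m : ℕ} {d : Fin n → ℕ}
    (X : Fin m → Matrix (∀ i, Fin (d i)) (∀ i, Fin (d i)) ℂ) : Continuous (orb X) := by
  apply continuous_pi
  intro j
  have := LU.continuous_kron d
  exact (this.matrix_conjTranspose.matrix_mul continuous_const).matrix_mul this

theorem orb_entry_continuous {n m : ℕ} {d : Fin n → ℕ}
    (X : Fin m → Matrix (∀ i, Fin (d i)) (∀ i, Fin (d i)) ℂ) (j a b) :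
    Continuous fun u => orb X u j a b :=
  ((continuous_apply j).comp (continuous_orb X)).matrix_elem a b

open MeasureTheory in
theorem moments_poly {n m : ℕ} {d : Fin n → ℕ} [MeasurableSpace (LU d)] [BorelSpace (LU d)]
    (μ : Measure (LU d)) [μ.IsHaarMeasure] [IsFiniteMeasure μ]
    (M N : Fin m → Matrix (∀ i, Fin (d i)) (∀ i, Fin (d i)) ℂ)
    (h : ∀ (ℓ : ℕ) (P : Fin ℓ → Fin m) (σ : Fin n → Equiv.Perm (Fin ℓ)),
      trMonP P σ M = trMonP P σ N)
    (q : MvPolynomial (Fin m × (∀ i, Fin (d i)) × (∀ i, Fin (d i))) ℂ) :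
    ∀ (ℓ : ℕ) (v : Fin ℓ → Fin m × (∀ i, Fin (d i)) × (∀ i, Fin (d i))),
    ∫ u : LU d, MvPolynomial.eval (fun p => orb M u p.1 p.2.1 p.2.2) q *
        ∏ c, orb M u (v c).1 (v c).2.1 (v c).2.2 ∂μ =
    ∫ u : LU d, MvPolynomial.eval (fun p => orb N u p.1 p.2.1 p.2.2) q *
        ∏ c, orb N u (v c).1 (v c).2.1 (v c).2.2 ∂μ := by
  have hint : ∀ f : LU d → ℂ, Continuous f → Integrable f μ := fun f hf =>
    hf.integrable_of_hasCompactSupport (HasCompactSupport.of_compactSpace f)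
  have hc : ∀ (X : Fin m → Matrix (∀ i, Fin (d i)) (∀ i, Fin (d i)) ℂ)
      (q : MvPolynomial (Fin m × (∀ i, Fin (d i)) × (∀ i, Fin (d i))) ℂ) (ℓ : ℕ)
      (v : Fin ℓ → Fin m × (∀ i, Fin (d i)) × (∀ i, Fin (d i))),
      Integrable (fun u : LU d => MvPolynomial.eval (fun p => orb X u p.1 p.2.1 p.2.2) q *
        ∏ c, orb X u (v c).1 (v c).2.1 (v c).2.2) μ := by
    intro X q ℓ v
    apply hint
    apply Continuous.mul
    · exact (MvPolynomial.continuous_eval q).comp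
        (continuous_pi fun p => orb_entry_continuous X p.1 p.2.1 p.2.2)
    · exact continuous_finsetProd _ fun c _ => orb_entry_continuous X _ _ _
  induction q using MvPolynomial.induction_on with
  | C a =>
    intro ℓ v
    simp only [MvPolynomial.eval_C]
    rw [integral_const_mul, integral_const_mul]
    congr 1
    exact moments μ M N (h ℓ) (fun c => (v c).1) (fun c => (v c).2.1) (fun c => (v c).2.2)
  | add p q hp hq =>
    intro ℓ v
    simp only [map_add, add_mul]
    rw [integral_add (hc M p ℓ v) (hc M q ℓ v), integral_add (hc N p ℓ v) (hc N q ℓ v),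
      hp, hq]
  | mul_X p x hp =>
    intro ℓ v
    have := hp (ℓ + 1) (Fin.cons x v)
    simp only [Fin.prod_univ_succ, Fin.cons_zero, Fin.cons_succ] at this
    simp only [map_mul, MvPolynomial.eval_X, mul_assoc]
    exact this

open MeasureTheory in
theorem orbits_meet {n m : ℕ} {d : Fin n → ℕ}
    (M N : Fin m → Matrix (∀ i, Fin (d i)) (∀ i, Fin (d i)) ℂ)
    (hM : ∀ j, (M j).IsHermitian) (hN : ∀ j, (N j).IsHermitian)
    (h : ∀ (ℓ : ℕ) (P : Fin ℓ → Fin m) (σ : Fin n → Equiv.Perm (Fin ℓ)),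
      trMonP P σ M = trMonP P σ N) :
    ∃ u v : LU d, orb M u = orb N v := by
  by_contra hne
  push Not at hne
  obtain ⟨_, _, μ, _, _⟩ := LU.exists_haar d
  let S : Set (Fin m → Matrix (∀ i, Fin (d i)) (∀ i, Fin (d i)) ℂ) :=
    Set.range (orb M) ∪ Set.range (orb N)
  have hS : IsCompact S :=
    (isCompact_range (continuous_orb M)).union (isCompact_range (continuous_orb N))
  have : CompactSpace S := isCompact_iff_compactSpace.mp hS
  have hherm : ∀ x : S, ∀ j, (x.1 j).IsHermitian := by
    rintro ⟨x, ⟨u, rfl⟩ | ⟨u, rfl⟩⟩ j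
    · exact Matrix.isHermitian_conjTranspose_mul_mul _ (hM j)
    · exact Matrix.isHermitian_conjTranspose_mul_mul _ (hN j)
  let oM : LU d → S := fun u => ⟨orb M u, Or.inl ⟨u, rfl⟩⟩
  let oN : LU d → S := fun u => ⟨orb N u, Or.inr ⟨u, rfl⟩⟩
  have hoM : Continuous oM := (continuous_orb M).subtype_mk _
  have hoN : Continuous oN := (continuous_orb N).subtype_mk _
  let co : Fin m × (∀ i, Fin (d i)) × (∀ i, Fin (d i)) → C(S, ℂ) := fun p =>
    ⟨fun x => x.1 p.1 p.2.1 p.2.2,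
      ((continuous_apply p.1).comp continuous_subtype_val).matrix_elem p.2.1 p.2.2⟩
  let ev : MvPolynomial (Fin m × (∀ i, Fin (d i)) × (∀ i, Fin (d i))) ℂ →ₐ[ℂ] C(S, ℂ) :=
    MvPolynomial.aeval co
  have hev : ∀ q (x : S), ev q x = MvPolynomial.eval (fun p => x.1 p.1 p.2.1 p.2.2) q := by
    intro q x
    induction q using MvPolynomial.induction_on with
    | C a => simp [ev]
    | add p q hp hq => simp [hp, hq]
    | mul_X p y hp => simp [hp]; left; simp [ev, co]
  let A : StarSubalgebra ℂ C(S, ℂ) :=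
    { ev.range with
      star_mem' := by
        rintro _ ⟨q, rfl⟩
        change star (ev q) ∈ ev.range
        induction q using MvPolynomial.induction_on with
        | C a =>
          refine ⟨MvPolynomial.C (star a), ?_⟩
          ext x
          change ev _ x = star (ev _ x)
          rw [hev, hev]; simp
        | add p q hp hq => rw [map_add, star_add]; exact add_mem hp hq
        | mul_X p y hp =>
          rw [map_mul, star_mul']
          refine mul_mem hp ⟨MvPolynomial.X (y.1, y.2.2, y.2.1), ?_⟩
          ext x
          change ev _ x = star (ev _ x)
          rw [hev, hev]
          simp only [MvPolynomial.eval_X]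
          exact ((hherm x y.1).apply _ _).symm }
  have hA : A.topologicalClosure = ⊤ := by
    apply ContinuousMap.starSubalgebra_topologicalClosure_eq_top_of_separatesPoints
    intro x y hxy
    have : ∃ p : Fin m × (∀ i, Fin (d i)) × (∀ i, Fin (d i)),
        x.1 p.1 p.2.1 p.2.2 ≠ y.1 p.1 p.2.1 p.2.2 := by
      by_contra hcon
      push Not at hcon
      apply hxy
      apply Subtype.ext
      funext j
      ext a b
      exact hcon (j, a, b)
    obtain ⟨p, hp⟩ := this
    refine ⟨ev (MvPolynomial.X p), ⟨ev (MvPolynomial.X p), ⟨MvPolynomial.X p, rfl⟩, rfl⟩, ?_⟩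
    rw [hev, hev]
    simpa using hp
  have hint : ∀ f : LU d → ℂ, Continuous f → Integrable f μ := fun f hf =>
    hf.integrable_of_hasCompactSupport (HasCompactSupport.of_compactSpace f)
  have hL : ∀ o : LU d → S, Continuous o →
      Continuous fun f : C(S, ℂ) => ∫ u, f (o u) ∂μ := by
    intro o ho
    apply LipschitzWith.continuous (K := (μ.real Set.univ).toNNReal)
    apply LipschitzWith.of_dist_le_mul
    intro f g
    have hfi : Integrable (fun u => f (o u)) μ := hint _ (f.continuous.comp ho)
    have hgi : Integrable (fun u => g (o u)) μ := hint _ (g.continuous.comp ho)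
    rw [dist_eq_norm, dist_eq_norm, ← integral_sub hfi hgi, Real.coe_toNNReal _ measureReal_nonneg, mul_comm]
    apply norm_integral_le_of_norm_le_const
    filter_upwards with u
    exact (f - g).norm_coe_le_norm (o u)
  have hall : ∀ f : C(S, ℂ), ∫ u, f (oM u) ∂μ = ∫ u, f (oN u) ∂μ := by
    intro f
    have hcl : IsClosed {f : C(S, ℂ) | ∫ u, f (oM u) ∂μ = ∫ u, f (oN u) ∂μ} :=
      isClosed_eq (hL oM hoM) (hL oN hoN)
    have hf : f ∈ A.topologicalClosure := hA ▸ StarSubalgebra.mem_top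
    have hf' : f ∈ closure (A : Set C(S, ℂ)) := by
      rwa [← StarSubalgebra.topologicalClosure_coe]
    refine hcl.closure_subset_iff.mpr ?_ hf'
    rintro _ ⟨q, rfl⟩
    change ∫ u, ev q (oM u) ∂μ = ∫ u, ev q (oN u) ∂μ
    simp only [hev]
    simpa using moments_poly μ M N h q 0 Fin.elim0
  obtain ⟨f, hf0, hf1, -⟩ := exists_continuous_zero_one_of_isClosed
    (isCompact_range hoN).isClosed (isCompact_range hoM).isClosed (by
      rw [Set.disjoint_left]
      rintro _ ⟨v, rfl⟩ ⟨u, hu⟩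
      exact hne u v (congrArg Subtype.val hu))
  have := hall ⟨fun x => (f x : ℂ), Complex.continuous_ofReal.comp f.continuous⟩
  have e1 : ∀ u, f (oM u) = 1 := fun u => hf1 ⟨u, rfl⟩
  have e0 : ∀ u, f (oN u) = 0 := fun u => hf0 ⟨u, rfl⟩
  simp only [ContinuousMap.coe_mk, e1, e0] at this
  simp at this
  rw [measureReal_eq_zero_iff, Measure.measure_univ_eq_zero] at this
  exact NeZero.ne μ this

theorem lu_of_tr {n m : ℕ} {d : Fin n → ℕ}
    (M N : Fin m → Matrix (∀ i, Fin (d i)) (∀ i, Fin (d i)) ℂ)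
    (hM : ∀ j, (M j).IsHermitian) (hN : ∀ j, (N j).IsHermitian)
    (h : ∀ (ℓ : ℕ) (P : Fin ℓ → Fin m) (σ : Fin n → Equiv.Perm (Fin ℓ)),
      trMonP P σ M = trMonP P σ N) :
    ∃ u : ∀ i, Matrix (Fin (d i)) (Fin (d i)) ℂ,
        (∀ i, u i ∈ Matrix.unitaryGroup (Fin (d i)) ℂ) ∧
        ∀ j, N j = kron u * M j * (kron u)ᴴ := by
  obtain ⟨u, v, huv⟩ := orbits_meet M N hM hN h
  refine ⟨fun i => v.mat i * (u.mat i)ᴴ, fun i => mul_mem (v i).2 (Unitary.star_mem (u i).2),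
    fun j => ?_⟩
  have hj := congrFun huv j
  simp only [orb] at hj
  have hv : kron v.mat * (kron v.mat)ᴴ = 1 := by
    rw [kron_conjTranspose, kron_mul, ← kron_one']
    congr 1
    funext i
    exact Matrix.mem_unitaryGroup_iff.mp (v i).2
  rw [← kron_mul, ← kron_conjTranspose, Matrix.conjTranspose_mul,
    Matrix.conjTranspose_conjTranspose]
  calc N j = (kron v.mat * (kron v.mat)ᴴ) * N j * (kron v.mat * (kron v.mat)ᴴ) := by
        rw [hv]; simp
    _ = kron v.mat * ((kron v.mat)ᴴ * N j * kron v.mat) * (kron v.mat)ᴴ := by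
        simp only [mul_assoc]
    _ = _ := by
        rw [← hj]
        simp only [mul_assoc]

theorem poly_of_lu {n m : ℕ} {d : Fin n → ℕ}
    (M N : Fin m → Matrix (∀ i, Fin (d i)) (∀ i, Fin (d i)) ℂ)
    (h : ∃ u : ∀ i, Matrix (Fin (d i)) (Fin (d i)) ℂ,
        (∀ i, u i ∈ Matrix.unitaryGroup (Fin (d i)) ℂ) ∧
        ∀ j, N j = kron u * M j * (kron u)ᴴ)
    (f : MvPolynomial (Fin m × (∀ i, Fin (d i)) × (∀ i, Fin (d i))) ℂ)
    (hf : ∀ g : ∀ i, Matrix (Fin (d i)) (Fin (d i)) ℂ, (∀ i, IsUnit (g i)) →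
          ∀ X : Fin m → Matrix (∀ i, Fin (d i)) (∀ i, Fin (d i)) ℂ,
            MvPolynomial.eval (fun p => (kron g * X p.1 * (kron g)⁻¹) p.2.1 p.2.2) f =
              MvPolynomial.eval (fun p => X p.1 p.2.1 p.2.2) f) :
    MvPolynomial.eval (fun p => M p.1 p.2.1 p.2.2) f =
          MvPolynomial.eval (fun p => N p.1 p.2.1 p.2.2) f := by
  obtain ⟨u, hu, hN⟩ := h
  have hinv : (kron u)⁻¹ = (kron u)ᴴ := by
    apply Matrix.inv_eq_right_inv
    rw [kron_conjTranspose, kron_mul, ← kron_one']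
    congr 1
    funext i
    exact Matrix.mem_unitaryGroup_iff.mp (hu i)
  rw [← hf u (fun i => IsUnit.of_mul_eq_one _ (Matrix.mem_unitaryGroup_iff.mp (hu i))) M, hinv]
  simp only [hN]

theorem tr_of_poly {n m : ℕ} {d : Fin n → ℕ}
    (M N : Fin m → Matrix (∀ i, Fin (d i)) (∀ i, Fin (d i)) ℂ)
    (h : ∀ f : MvPolynomial (Fin m × (∀ i, Fin (d i)) × (∀ i, Fin (d i))) ℂ,
        (∀ g : ∀ i, Matrix (Fin (d i)) (Fin (d i)) ℂ, (∀ i, IsUnit (g i)) →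
          ∀ X : Fin m → Matrix (∀ i, Fin (d i)) (∀ i, Fin (d i)) ℂ,
            MvPolynomial.eval (fun p => (kron g * X p.1 * (kron g)⁻¹) p.2.1 p.2.2) f =
              MvPolynomial.eval (fun p => X p.1 p.2.1 p.2.2) f) →
        MvPolynomial.eval (fun p => M p.1 p.2.1 p.2.2) f =
          MvPolynomial.eval (fun p => N p.1 p.2.1 p.2.2) f)
    (ℓ : ℕ) (P : Fin ℓ → Fin m) (σ : Fin n → Equiv.Perm (Fin ℓ)) :
    trMonP P σ M = trMonP P σ N := by
  obtain ⟨f, hf⟩ := trMonP_poly (d := d) P σ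
  rw [← hf, ← hf]
  apply h
  intro g hg X
  rw [hf X, ← trMonP_conj P σ g hg X, ← hf]

/-- Two `m`-tuples of density operators on `V₁⊗⋯⊗Vₙ` are in the same local
unitary orbit iff all polynomial invariants of the local GL-conjugation action agree on
them; equivalently, iff the trace monomials `Tr^P_σ` all agree on them. -/
theorem stmt_14 {n m : ℕ} (d : Fin n → ℕ)
    (M N : Fin m → Matrix (∀ i, Fin (d i)) (∀ i, Fin (d i)) ℂ)
    (hM : ∀ j, (M j).PosSemidef ∧ (M j).trace = 1)
    (hN : ∀ j, (N j).PosSemidef ∧ (N j).trace = 1) :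
    ((∃ u : ∀ i, Matrix (Fin (d i)) (Fin (d i)) ℂ,
        (∀ i, u i ∈ Matrix.unitaryGroup (Fin (d i)) ℂ) ∧
        ∀ j, N j = kron u * M j * (kron u)ᴴ) ↔
      (∀ f : MvPolynomial (Fin m × (∀ i, Fin (d i)) × (∀ i, Fin (d i))) ℂ,
        (∀ g : ∀ i, Matrix (Fin (d i)) (Fin (d i)) ℂ, (∀ i, IsUnit (g i)) →
          ∀ X : Fin m → Matrix (∀ i, Fin (d i)) (∀ i, Fin (d i)) ℂ,
            MvPolynomial.eval (fun p => (kron g * X p.1 * (kron g)⁻¹) p.2.1 p.2.2) f =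
              MvPolynomial.eval (fun p => X p.1 p.2.1 p.2.2) f) →
        MvPolynomial.eval (fun p => M p.1 p.2.1 p.2.2) f =
          MvPolynomial.eval (fun p => N p.1 p.2.1 p.2.2) f)) ∧
    ((∃ u : ∀ i, Matrix (Fin (d i)) (Fin (d i)) ℂ,
        (∀ i, u i ∈ Matrix.unitaryGroup (Fin (d i)) ℂ) ∧
        ∀ j, N j = kron u * M j * (kron u)ᴴ) ↔
      (∀ (ℓ : ℕ) (P : Fin ℓ → Fin m) (σ : Fin n → Equiv.Perm (Fin ℓ)),
        trMonP P σ M = trMonP P σ N)) := by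
  have hM' := fun j => (hM j).1.isHermitian
  have hN' := fun j => (hN j).1.isHermitian
  exact ⟨⟨poly_of_lu M N, fun h => lu_of_tr M N hM' hN' (tr_of_poly M N h)⟩,
    ⟨fun h => tr_of_poly M N (poly_of_lu M N h), lu_of_tr M N hM' hN'⟩⟩
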